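/- arXiv:1405.2786 — 5 statements merged into one kernel-verified Lean document; each statement's English description precedes it below -/
import Mathlib

section
/- Let X ∈ ℂ^{T×M} satisfy the RIP of order k with constant δ_k ∈ [0,1). If J₁, J₂ ⊆ {1,…,M} are disjoint index sets with |J₁ ∪ J₂| ≤ k, then the spectral norm of (X_{J₂})^H X_{J₁} satisfies ‖(X_{J₂})^H X_{J₁}‖ ≤ δ_k. -/
open Matrix

/-- `X` satisfies the restricted isometry property (RIP) of order `k` with
constant `δ ∈ [0,1)`: for every `k`-sparse vector `h`,
`(1−δ)‖h‖² ≤ ‖Xh‖² ≤ (1+δ)‖h‖²` (Euclidean norms). -/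
def RIP {T M : ℕ} (X : Matrix (Fin T) (Fin M) ℂ) (k : ℕ) (δ : ℝ) : Prop :=
  0 ≤ δ ∧ δ < 1 ∧
    ∀ h : Fin M → ℂ, (Finset.univ.filter fun i => h i ≠ 0).card ≤ k →
      (1 - δ) * ∑ i, ‖h i‖ ^ 2 ≤ ∑ j, ‖X.mulVec h j‖ ^ 2 ∧
        ∑ j, ‖X.mulVec h j‖ ^ 2 ≤ (1 + δ) * ∑ i, ‖h i‖ ^ 2

/-- Spectral norm (largest singular value) of a complex matrix, realized as the
operator norm of the induced linear map between Euclidean spaces. -/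
noncomputable def specNorm {m n : Type*} [Fintype m] [Fintype n] [DecidableEq n]
    (A : Matrix m n ℂ) : ℝ :=
  ‖LinearMap.toContinuousLinearMap (Matrix.toEuclideanLin A)‖

/-- Submatrix of `X` formed by the columns indexed by the set `J`. -/
def cols {T M : ℕ} (X : Matrix (Fin T) (Fin M) ℂ) (J : Finset (Fin M)) :
    Matrix (Fin T) J ℂ :=
  X.submatrix id (fun j => (j : Fin M))

/-- Extension by zero of a vector indexed by `J`. -/
noncomputable def extZ {M : ℕ} (J : Finset (Fin M)) (u : J → ℂ) : Fin M → ℂ :=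
  fun i => if h : i ∈ J then u ⟨i, h⟩ else 0

lemma sum_extZ {M : ℕ} {β : Type*} [AddCommMonoid β] (J : Finset (Fin M)) (u : J → ℂ)
    (f : Fin M → ℂ → β) (hf : ∀ i, f i 0 = 0) :
    ∑ i, f i (extZ J u i) = ∑ i : J, f i (u i) := by
  rw [← Finset.sum_subset (Finset.subset_univ J), ← Finset.sum_coe_sort J]
  · apply Finset.sum_congr rfl
    intro i _
    simp [extZ]
  · intro i _ hi
    simp [extZ, hi, hf]

lemma mulVec_extZ {T M : ℕ} (X : Matrix (Fin T) (Fin M) ℂ) (J : Finset (Fin M)) (u : J → ℂ) :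
    X.mulVec (extZ J u) = (cols X J).mulVec u := by
  ext j
  simpa [mulVec, dotProduct, cols] using sum_extZ J u (fun i z => X j i * z) (by simp)

lemma norm_comb (a c : ℝ) (x y : ℂ) :
    ‖(a : ℂ) * x + c * y‖ ^ 2 = a ^ 2 * ‖x‖ ^ 2 + 2 * a * c * (star y * x).re
      + c ^ 2 * ‖y‖ ^ 2 := by
  simp only [← Complex.normSq_eq_norm_sq, Complex.normSq_apply]
  simp
  ring

lemma sum_norm_comb {ι : Type*} [Fintype ι] (a c : ℝ) (x y : ι → ℂ) :
    ∑ i, ‖((a : ℂ) • x + (c : ℂ) • y) i‖ ^ 2 = a ^ 2 * ∑ i, ‖x i‖ ^ 2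
      + 2 * a * c * (star y ⬝ᵥ x).re + c ^ 2 * ∑ i, ‖y i‖ ^ 2 := by
  simp only [Pi.add_apply, Pi.smul_apply, smul_eq_mul, norm_comb, Finset.sum_add_distrib,
    Finset.mul_sum, dotProduct, Complex.re_sum, Pi.star_apply]

/-- Lemma 7, inequality (property3): if `X` satisfies the RIP of order `k` with
constant `δ_k` and `J₁, J₂` are disjoint with `|J₁ ∪ J₂| ≤ k`, then
`‖(X_{J₂})ᴴ X_{J₁}‖ ≤ δ_k`. -/
theorem specNorm_conjTranspose_mul_le_of_disjoint
    {T M : ℕ} (X : Matrix (Fin T) (Fin M) ℂ) (k : ℕ) (δ : ℝ) (hX : RIP X k δ)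
    (J₁ J₂ : Finset (Fin M)) (hdisj : Disjoint J₁ J₂) (hcard : (J₁ ∪ J₂).card ≤ k) :
    specNorm ((cols X J₂)ᴴ * cols X J₁) ≤ δ := by
  obtain ⟨h0, h1, hR⟩ := hX
  refine ContinuousLinearMap.opNorm_le_bound _ h0 fun u => ?_
  set A := (cols X J₂)ᴴ * cols X J₁ with hA
  set v : J₂ → ℂ := A.mulVec u.ofLp with hv
  set p := (cols X J₁).mulVec u.ofLp with hp
  set q := (cols X J₂).mulVec v with hq
  have hvn : (LinearMap.toContinuousLinearMap (Matrix.toEuclideanLin A)) u = WithLp.toLp 2 v := rfl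
  rw [hvn]
  have hV : ‖WithLp.toLp 2 v‖ ^ 2 = ∑ i, ‖v i‖ ^ 2 := by
    rw [EuclideanSpace.norm_sq_eq]
  have hU : ‖u‖ ^ 2 = ∑ i, ‖u.ofLp i‖ ^ 2 := by
    rw [EuclideanSpace.norm_sq_eq]
  have hqp : (star q ⬝ᵥ p).re = ‖WithLp.toLp 2 v‖ ^ 2 := by
    have : star q ⬝ᵥ p = star v ⬝ᵥ v := by
      have hvp : v = (cols X J₂)ᴴ *ᵥ p := by rw [hv, hA, hp, mulVec_mulVec]
      calc star q ⬝ᵥ p = star v ⬝ᵥ ((cols X J₂)ᴴ *ᵥ p) := by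
            rw [hq, star_mulVec, dotProduct_mulVec _ _ p]
        _ = star v ⬝ᵥ v := by rw [← hvp]
    rw [this, hV]
    simp only [dotProduct, Complex.re_sum, Pi.star_apply]
    refine Finset.sum_congr rfl fun i _ => ?_
    rw [← Complex.normSq_eq_norm_sq, Complex.normSq_apply]
    simp
  have horth : star (extZ J₂ v) ⬝ᵥ extZ J₁ u.ofLp = 0 := by
    refine Finset.sum_eq_zero fun i _ => ?_
    by_cases hi : i ∈ J₁
    · have : i ∉ J₂ := Finset.disjoint_left.mp hdisj hi
      simp [extZ, this]
    · simp [extZ, hi]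
  have key : ∀ a c : ℝ, _ := fun a c => hR ((a : ℂ) • extZ J₁ u.ofLp + (c : ℂ) • extZ J₂ v) (by
    refine le_trans (Finset.card_le_card ?_) hcard
    intro i hi
    by_contra hn
    simp only [Finset.mem_union, not_or] at hn
    simp [extZ, hn.1, hn.2] at hi)
  simp only [mulVec_add, mulVec_smul, mulVec_extZ, sum_norm_comb, horth, ← hp, ← hq, hqp] at key
  rw [sum_extZ J₁ u.ofLp (fun _ z => ‖z‖ ^ 2) (by simp),
    sum_extZ J₂ v (fun _ z => ‖z‖ ^ 2) (by simp), ← hV, ← hU] at key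
  have k1 := (key ‖WithLp.toLp 2 v‖ ‖u‖).2
  have k2 := (key ‖WithLp.toLp 2 v‖ (-‖u‖)).1
  have hn : 0 ≤ ‖u‖ := norm_nonneg u
  have hm : 0 ≤ ‖WithLp.toLp 2 v‖ := norm_nonneg _
  rcases hm.eq_or_lt with hm' | hm'
  · rw [← hm']; positivity
  rcases hn.eq_or_lt with hn' | hn'
  · have : u = 0 := norm_eq_zero.mp hn'.symm
    have : v = 0 := by rw [hv, this]; simp
    rw [this]; simpa using mul_nonneg h0 hn
  generalize ‖WithLp.toLp 2 v‖ = m at *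
  generalize ‖u‖ = n at *
  have : (n * m ^ 2) * m ≤ (n * m ^ 2) * (δ * n) := by
    simp only [Complex.zero_re] at k1 k2
    nlinarith
  exact le_of_mul_le_mul_left this (by positivity)
end

section
/- Let χ_{2k} be a random variable with chi-squared distribution with 2k degrees of freedom (k a positive integer). Then for every real x with 0 < x < 1, Pr(χ_{2k} ≤ 2xk) ≤ exp(−k(x − 1 − ln x)). -/
open MeasureTheory ProbabilityTheory

lemma gammaPDFReal_tilt (k : ℝ) (hk : 0 < k) (x : ℝ) (hx0 : 0 < x) (hx1 : x < 1)
    (y : ℝ) (hy : y ≤ 2 * x * k) :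
    gammaPDFReal k (1 / 2) y ≤
      Real.exp (-(k * (x - 1 - Real.log x))) * gammaPDFReal k (1 / (2 * x)) y := by
  unfold gammaPDFReal
  split_ifs with h
  · have h1 : ((1 : ℝ) / 2) ^ k = Real.exp (k * Real.log x) * (1 / (2 * x)) ^ k := by
      rw [mul_comm k, ← Real.rpow_def_of_pos hx0, ← Real.mul_rpow hx0.le (by positivity)]
      congr 1
      field_simp
    have h2 : Real.exp (-(1 / 2 * y)) ≤
        Real.exp (k * (1 - x)) * Real.exp (-(1 / (2 * x) * y)) := by
      rw [← Real.exp_add, Real.exp_le_exp]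
      have h3 : y / (2 * x) * (1 - x) ≤ k * (1 - x) := by
        apply mul_le_mul_of_nonneg_right _ (by linarith)
        rw [div_le_iff₀ (by positivity)]
        linarith
      have h4 : y / (2 * x) * (1 - x) = 1 / (2 * x) * y - 1 / 2 * y := by
        field_simp
      linarith
    have h5 : Real.exp (-(k * (x - 1 - Real.log x))) =
        Real.exp (k * Real.log x) * Real.exp (k * (1 - x)) := by
      rw [← Real.exp_add]
      congr 1
      ring
    have hG : 0 < Real.Gamma k := Real.Gamma_pos_of_pos hk
    rw [h5, h1]
    calc _ ≤ Real.exp (k * Real.log x) * (1 / (2 * x)) ^ k / Real.Gamma k * y ^ (k - 1) *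
          (Real.exp (k * (1 - x)) * Real.exp (-(1 / (2 * x) * y))) :=
          mul_le_mul_of_nonneg_left h2 (by positivity)
      _ = _ := by ring
  · simp

/-- Lemma 8 (lower-tail Chernoff bound): if `T'` is chi-squared distributed with
`2k` degrees of freedom (i.e. Gamma with shape `k` and rate `1/2`), then for
`0 < x < 1`, `Pr(T' ≤ 2xk) ≤ exp(−k(x − 1 − ln x))`. -/
theorem chiSq_lower_tail_chernoff
    {Ω : Type*} [MeasurableSpace Ω] (μ : Measure Ω) [IsProbabilityMeasure μ]
    (k : ℕ) (hk : 0 < k) (T' : Ω → ℝ) (hT' : Measurable T')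
    (hdist : μ.map T' = gammaMeasure k (1 / 2))
    (x : ℝ) (hx0 : 0 < x) (hx1 : x < 1) :
    μ {ω | T' ω ≤ 2 * x * k} ≤
      ENNReal.ofReal (Real.exp (-(k * (x - 1 - Real.log x)))) := by
  have hk' : (0 : ℝ) < k := by exact_mod_cast hk
  have h0 : μ {ω | T' ω ≤ 2 * x * k} = μ.map T' (Set.Iic (2 * x * k)) := by
    rw [Measure.map_apply hT' measurableSet_Iic]
    rfl
  rw [h0, hdist, gammaMeasure, withDensity_apply _ measurableSet_Iic]
  calc _ ≤ ∫⁻ y in Set.Iic (2 * x * k),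
        ENNReal.ofReal (Real.exp (-(k * (x - 1 - Real.log x)))) *
          gammaPDF k (1 / (2 * x)) y := by
        apply setLIntegral_mono' measurableSet_Iic
        intro y hy
        unfold gammaPDF
        rw [← ENNReal.ofReal_mul (Real.exp_pos _).le]
        exact ENNReal.ofReal_le_ofReal (gammaPDFReal_tilt k hk' x hx0 hx1 y hy)
    _ ≤ ∫⁻ y, ENNReal.ofReal (Real.exp (-(k * (x - 1 - Real.log x)))) *
          gammaPDF k (1 / (2 * x)) y := setLIntegral_le_lintegral _ _
    _ = _ := by
        rw [lintegral_const_mul' _ _ ENNReal.ofReal_ne_top,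
          lintegral_gammaPDF_eq_one hk' (by positivity), mul_one]
end

section
/- Let X ∈ ℂ^{T×M} satisfy the RIP of order 1 with constant δ₁ and of order s with constant δ_s, where 0 ≤ δ₁ ≤ δ_s < 1/2. Let Ω ⊆ {1,…,M} with |Ω| ≤ s, let J ⊊ Ω, and let l ∈ Ω \ J. Let P_J = X_J ((X_J)^H X_J)^{−1} (X_J)^H be the orthogonal projection onto the column span of X_J (well defined since (X_J)^H X_J is invertible). Then the spectral norm of the 1×|Ω\J| matrix X(l)^H (I − P_J) X_{Ω\J} satisfies ‖X(l)^H (I − P_J) X_{Ω\J}‖ ≥ (1 − 2δ_s)/(1 − δ_s). -/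
open Matrix

/-- The `l`-th column of `X`, viewed as a `T × 1` matrix. -/
def col1 {T M : ℕ} (X : Matrix (Fin T) (Fin M) ℂ) (l : Fin M) :
    Matrix (Fin T) (Fin 1) ℂ :=
  fun t _ => X t l

/-- The orthogonal projection `P_J = X_J ((X_J)ᴴ X_J)⁻¹ (X_J)ᴴ` onto the column
span of `X_J`. -/
noncomputable def projMat {T M : ℕ} (X : Matrix (Fin T) (Fin M) ℂ)
    (J : Finset (Fin M)) : Matrix (Fin T) (Fin T) ℂ :=
  cols X J * ((cols X J)ᴴ * cols X J)⁻¹ * (cols X J)ᴴ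

theorem ext_mulVec {T M : ℕ} (X : Matrix (Fin T) (Fin M) ℂ) (J : Finset (Fin M)) (v : J → ℂ) :
    X.mulVec (fun i => if h : i ∈ J then v ⟨i, h⟩ else 0) = (cols X J).mulVec v := by
  funext t
  simp only [Matrix.mulVec, dotProduct, cols, Matrix.submatrix_apply, id]
  rw [← Finset.sum_subset (Finset.subset_univ J) (by intro i _ hi; simp [hi])]
  rw [← Finset.sum_coe_sort J]
  apply Finset.sum_congr rfl
  intro i _
  simp

open scoped ComplexOrder in
theorem gram_isUnit {T M : ℕ} (X : Matrix (Fin T) (Fin M) ℂ) (s : ℕ) (δ : ℝ)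
    (hX : RIP X s δ) (J : Finset (Fin M)) (hJ : J.card ≤ s) :
    IsUnit ((cols X J)ᴴ * cols X J) := by
  have hinj : Function.Injective (cols X J).mulVec := by
    have key : ∀ v, (cols X J).mulVec v = 0 → v = 0 := by
      intro v hv
      have h1 := (hX.2.2 (fun i => if h : i ∈ J then v ⟨i, h⟩ else 0) (by
        refine le_trans (Finset.card_le_card ?_) hJ
        intro i hi
        by_contra h
        simp [h] at hi)).1
      rw [ext_mulVec, hv] at h1
      simp only [Pi.zero_apply, norm_zero, ne_eq, OfNat.ofNat_ne_zero, not_false_eq_true,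
        zero_pow, Finset.sum_const_zero] at h1
      have h2 : 0 < 1 - δ := by linarith [hX.2.1]
      have h3 := nonpos_of_mul_nonpos_right h1 h2
      funext j
      have h4 := Finset.single_le_sum
        (f := fun i : Fin M => ‖(if h : i ∈ J then v ⟨i, h⟩ else 0)‖ ^ 2)
        (fun i _ => by positivity) (Finset.mem_univ (j : Fin M))
      have h5 := h4.trans h3
      simp only [Finset.coe_mem, dite_true] at h5
      have h6 : ‖v j‖ = 0 := by
        have := sq_nonneg ‖v j‖
        exact pow_eq_zero_iff (two_ne_zero) |>.1 (le_antisymm h5 this)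
      simpa using h6
    intro v w hvw
    have := key (v - w) (by rw [Matrix.mulVec_sub]; exact sub_eq_zero.2 hvw)
    exact sub_eq_zero.1 this
  exact (Matrix.PosDef.conjTranspose_mul_self _ hinj).isUnit

theorem entry_le_specNorm {m n : Type*} [Fintype m] [Fintype n] [DecidableEq n]
    (A : Matrix m n ℂ) (i : m) (j : n) : ‖A i j‖ ≤ specNorm A := by
  have h := (LinearMap.toContinuousLinearMap (Matrix.toEuclideanLin A)).le_opNorm
    (EuclideanSpace.single j 1)
  rw [EuclideanSpace.norm_single, norm_one, mul_one] at h
  refine le_trans ?_ h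
  refine le_trans (le_of_eq ?_) (PiLp.norm_apply_le _ i)
  simp [Matrix.toEuclideanLin_apply]

/-- Inequality (derivation_3) in Appendix B: if `X` satisfies the RIP of orders `1`
and `s` with constants `0 ≤ δ₁ ≤ δ_s < 1/2`, `|Ω| ≤ s`, `J ⊊ Ω` and `l ∈ Ω \ J`,
then `‖X(l)ᴴ (I − P_J) X_{Ω\J}‖ ≥ (1 − 2δ_s)/(1 − δ_s)`, the Gram matrix
`(X_J)ᴴ X_J` being invertible so that `P_J` is well defined. -/
theorem specNorm_col_proj_ge
    {T M : ℕ} (X : Matrix (Fin T) (Fin M) ℂ) (s : ℕ) (δ₁ δs : ℝ)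
    (hX1 : RIP X 1 δ₁) (hXs : RIP X s δs) (hδ : δ₁ ≤ δs) (hδs : δs < 1 / 2)
    (Ω J : Finset (Fin M)) (hΩ : Ω.card ≤ s) (hJ : J ⊂ Ω)
    (l : Fin M) (hl : l ∈ Ω \ J) :
    IsUnit ((cols X J)ᴴ * cols X J) ∧
      (1 - 2 * δs) / (1 - δs) ≤
        specNorm ((col1 X l)ᴴ * ((1 : Matrix (Fin T) (Fin T) ℂ) - projMat X J) *
          cols X (Ω \ J)) := by
  classical
  have hl' := Finset.mem_sdiff.1 hl
  have hU := gram_isUnit X s δs hXs J ((Finset.card_le_card hJ.1).trans hΩ)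
  refine ⟨hU, ?_⟩
  set B := cols X J with hB
  set x := col1 X l with hx
  set C := (Bᴴ * B)⁻¹ * (Bᴴ * x) with hC
  set y := x - B * C with hy
  have hBy : Bᴴ * y = 0 := by
    rw [hy, Matrix.mul_sub, ← Matrix.mul_assoc, hC, ← Matrix.mul_assoc (Bᴴ * B),
      Matrix.mul_nonsing_inv _ ((Matrix.isUnit_iff_isUnit_det _).1 hU), Matrix.one_mul, sub_self]
  have hPx : ((1 : Matrix (Fin T) (Fin T) ℂ) - projMat X J) * x = y := by
    simp only [projMat, ← hB, hy, hC, Matrix.sub_mul, Matrix.one_mul, Matrix.mul_assoc]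
  have hxy : xᴴ * y = yᴴ * y := by
    have : x = y + B * C := by rw [hy]; simp
    conv_lhs => rw [this]
    rw [Matrix.conjTranspose_add, Matrix.conjTranspose_mul, Matrix.add_mul, Matrix.mul_assoc,
      hBy, Matrix.mul_zero, add_zero]
  have hent : (xᴴ * ((1 : Matrix (Fin T) (Fin T) ℂ) - projMat X J) * cols X (Ω \ J)) 0 ⟨l, hl⟩ = (yᴴ * y) 0 0 := by
    rw [← hxy, ← hPx, ← Matrix.mul_assoc]
    rfl
  have hyy : ‖(yᴴ * y) 0 0‖ = ∑ t, ‖y t 0‖ ^ 2 := by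
    have : (yᴴ * y) 0 0 = ((∑ t, ‖y t 0‖ ^ 2 : ℝ) : ℂ) := by
      simp only [Matrix.mul_apply, Matrix.conjTranspose_apply, Complex.ofReal_sum,
        Complex.ofReal_pow]
      exact Finset.sum_congr rfl fun t _ => by
        rw [← Complex.conj_mul']; rfl
    rw [this, Complex.norm_real, Real.norm_of_nonneg (by positivity)]
  let g : Fin M → ℂ := fun i => if h : i ∈ J then C ⟨i, h⟩ 0 else 0
  let h : Fin M → ℂ := Pi.single l 1 - g
  have hmv : ∀ t, X.mulVec h t = y t 0 := by
    intro t
    have e : X.mulVec g = B.mulVec (fun j => C j 0) := ext_mulVec X J (fun j => C j 0)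
    simp only [h, Matrix.mulVec_sub, e, Matrix.mulVec_single_one]
    rfl
  have hR := (hXs.2.2 h (by
    refine le_trans (Finset.card_le_card ?_) hΩ
    intro i hi
    by_contra hc
    have h1 : i ∉ J := fun q => hc (hJ.1 q)
    have h2 : i ≠ l := fun q => hc (q ▸ hl'.1)
    simp [h, g, h1, h2] at hi)).1
  have hge : (1 : ℝ) ≤ ∑ i, ‖h i‖ ^ 2 := by
    have := Finset.single_le_sum (f := fun i : Fin M => ‖h i‖ ^ 2)
        (fun i _ => by positivity) (Finset.mem_univ l)
    simpa [h, g, hl'.2] using this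
  simp only [hmv] at hR
  have hpos : 0 < 1 - δs := by linarith
  have hfin := entry_le_specNorm (xᴴ * ((1 : Matrix (Fin T) (Fin T) ℂ) - projMat X J) * cols X (Ω \ J)) 0 ⟨l, hl⟩
  rw [hent, hyy] at hfin
  refine le_trans ?_ hfin
  refine le_trans ?_ hR
  rw [div_le_iff₀ hpos]
  nlinarith [mul_le_mul_of_nonneg_left hge (mul_pos hpos hpos).le, sq_nonneg δs]
end

section
/- Let X ∈ ℂ^{T×M} satisfy the RIP of order s with constant δ_s ∈ [0,1) and of order 2s with constant δ_{2s} ∈ [0,1). Let Ω₁, Ω₂ ⊆ {1,…,M} be disjoint index sets with |Ω₁| ≤ s and |Ω₁ ∪ Ω₂| ≤ 2s. Then, with X_{Ω₁}^† = ((X_{Ω₁})^H X_{Ω₁})^{−1} (X_{Ω₁})^H (well defined since (X_{Ω₁})^H X_{Ω₁} is invertible), the spectral norm satisfies ‖X_{Ω₁}^† X_{Ω₂}‖ ≤ δ_{2s}/(1 − δ_s). -/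
open Matrix

/-- Extension of a vector on `J` by zero. -/
noncomputable def extZero {M : ℕ} (J : Finset (Fin M)) (u : J → ℂ) : Fin M → ℂ :=
  fun i => if h : i ∈ J then u ⟨i, h⟩ else 0

lemma sum_extZero {M : ℕ} (J : Finset (Fin M)) (u : J → ℂ) (F : Fin M → ℂ → ℂ)
    (hF : ∀ i, F i 0 = 0) : ∑ i, F i (extZero J u i) = ∑ i : J, F i (u i) := by
  rw [← Finset.sum_subset (Finset.subset_univ J), ← Finset.sum_coe_sort J]
  · refine Finset.sum_congr rfl fun i _ => ?_
    simp [extZero]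
  · intro i _ hi
    simp [extZero, hi, hF]

lemma nsq_extZero {M : ℕ} (J : Finset (Fin M)) (u : J → ℂ) :
    ∑ i, ‖extZero J u i‖ ^ 2 = ∑ i, ‖u i‖ ^ 2 := by
  have := sum_extZero J u (fun _ z => ((‖z‖ ^ 2 : ℝ) : ℂ)) (by simp)
  exact_mod_cast this

lemma mulVec_extZero {T M : ℕ} (X : Matrix (Fin T) (Fin M) ℂ) (J : Finset (Fin M)) (u : J → ℂ) :
    X *ᵥ extZero J u = cols X J *ᵥ u := by
  ext j
  have := sum_extZero J u (fun i z => X j i * z) (by simp)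
  simpa [Matrix.mulVec, dotProduct, cols] using this

lemma extZero_eq_zero {M : ℕ} {J : Finset (Fin M)} (u : J → ℂ) {i : Fin M} (hi : i ∉ J) :
    extZero J u i = 0 := by simp [extZero, hi]

lemma rip_lower {T M : ℕ} {X : Matrix (Fin T) (Fin M) ℂ} {s : ℕ} {δ : ℝ} (h : RIP X s δ)
    (J : Finset (Fin M)) (hJ : J.card ≤ s) (u : J → ℂ) :
    (1 - δ) * ∑ i, ‖u i‖ ^ 2 ≤ ∑ j, ‖(cols X J *ᵥ u) j‖ ^ 2 := by
  have := (h.2.2 (extZero J u) (le_trans (Finset.card_le_card ?_) hJ)).1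
  · rwa [nsq_extZero, mulVec_extZero] at this
  · intro i hi
    by_contra hc
    simp [extZero_eq_zero u hc] at hi

lemma nsq_comb {M : ℕ} (J K : Finset (Fin M)) (hd : Disjoint J K) (u : J → ℂ) (w : K → ℂ)
    (a b : ℝ) :
    ∑ i, ‖(a : ℂ) * extZero J u i + (b : ℂ) * extZero K w i‖ ^ 2 =
      a ^ 2 * ∑ i, ‖u i‖ ^ 2 + b ^ 2 * ∑ i, ‖w i‖ ^ 2 := by
  rw [← nsq_extZero J u, ← nsq_extZero K w, Finset.mul_sum, Finset.mul_sum,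
    ← Finset.sum_add_distrib]
  refine Finset.sum_congr rfl fun i _ => ?_
  by_cases hi : i ∈ J
  · have hk : i ∉ K := Finset.disjoint_left.1 hd hi
    simp [extZero_eq_zero w hk, mul_pow]
  · simp [extZero_eq_zero u hi, mul_pow]

lemma rip_comb {T M : ℕ} {X : Matrix (Fin T) (Fin M) ℂ} {k : ℕ} {δ : ℝ} (h : RIP X k δ)
    (J K : Finset (Fin M)) (hd : Disjoint J K) (hc : (J ∪ K).card ≤ k) (u : J → ℂ) (w : K → ℂ)
    (a b : ℝ) :
    (1 - δ) * (a ^ 2 * ∑ i, ‖u i‖ ^ 2 + b ^ 2 * ∑ i, ‖w i‖ ^ 2) ≤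
      ∑ j, ‖(a : ℂ) * (cols X J *ᵥ u) j + (b : ℂ) * (cols X K *ᵥ w) j‖ ^ 2 ∧
    ∑ j, ‖(a : ℂ) * (cols X J *ᵥ u) j + (b : ℂ) * (cols X K *ᵥ w) j‖ ^ 2 ≤
      (1 + δ) * (a ^ 2 * ∑ i, ‖u i‖ ^ 2 + b ^ 2 * ∑ i, ‖w i‖ ^ 2) := by
  have := h.2.2 ((a : ℂ) • extZero J u + (b : ℂ) • extZero K w)
    (le_trans (Finset.card_le_card ?_) hc)
  · rw [Matrix.mulVec_add, Matrix.mulVec_smul, Matrix.mulVec_smul, mulVec_extZero,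
      mulVec_extZero] at this
    simpa only [Pi.add_apply, Pi.smul_apply, smul_eq_mul, nsq_comb J K hd] using this
  · intro i hi
    by_contra hcon
    rw [Finset.mem_union, not_or] at hcon
    simp [extZero_eq_zero u hcon.1, extZero_eq_zero w hcon.2] at hi

lemma polar (z y : ℂ) (t : ℝ) :
    ‖(t : ℂ) * z + ((1 : ℝ) : ℂ) * y‖ ^ 2 - ‖(t : ℂ) * z + ((-1 : ℝ) : ℂ) * y‖ ^ 2 =
      4 * t * (star z * y).re := by
  simp only [Complex.sq_norm, Complex.normSq_apply]
  simp
  ring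

lemma rip_inner {T M : ℕ} {X : Matrix (Fin T) (Fin M) ℂ} {k : ℕ} {δ : ℝ} (h : RIP X k δ)
    (J K : Finset (Fin M)) (hd : Disjoint J K) (hc : (J ∪ K).card ≤ k) (u : J → ℂ) (w : K → ℂ) :
    (star (cols X J *ᵥ u) ⬝ᵥ (cols X K *ᵥ w)).re ^ 2 ≤
      δ ^ 2 * (∑ i, ‖u i‖ ^ 2) * ∑ i, ‖w i‖ ^ 2 := by
  set R := (star (cols X J *ᵥ u) ⬝ᵥ (cols X K *ᵥ w)).re with hR
  set U := ∑ i, ‖u i‖ ^ 2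
  set W := ∑ i, ‖w i‖ ^ 2
  have key : ∀ t : ℝ, 0 ≤ (δ * U) * (t * t) + (-2 * R) * t + δ * W := by
    intro t
    have e1 := (rip_comb h J K hd hc u w t 1).2
    have e2 := (rip_comb h J K hd hc u w t (-1)).1
    have e3 : ∑ j, ‖(t : ℂ) * (cols X J *ᵥ u) j + ((1 : ℝ) : ℂ) * (cols X K *ᵥ w) j‖ ^ 2 -
        ∑ j, ‖(t : ℂ) * (cols X J *ᵥ u) j + ((-1 : ℝ) : ℂ) * (cols X K *ᵥ w) j‖ ^ 2 =
        4 * t * R := by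
      rw [← Finset.sum_sub_distrib, hR, dotProduct, Complex.re_sum, Finset.mul_sum]
      exact Finset.sum_congr rfl fun j _ => polar _ _ _
    nlinarith
  have := discrim_le_zero key
  rw [discrim] at this
  nlinarith

open scoped ComplexOrder in
lemma gram_ker {m n : Type*} [Fintype m] [Fintype n] (A : Matrix m n ℂ) (v : n → ℂ)
    (hv : (Aᴴ * A) *ᵥ v = 0) : A *ᵥ v = 0 :=
  (Matrix.conjTranspose_mul_self_mulVec_eq_zero A v).1 hv

/-- Bound used in Appendix D: if `X` satisfies the RIP of orders `s` and `2s` with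
constants `δ_s, δ_{2s} ∈ [0,1)` and `Ω₁, Ω₂` are disjoint with `|Ω₁| ≤ s` and
`|Ω₁ ∪ Ω₂| ≤ 2s`, then with `X_{Ω₁}^† = ((X_{Ω₁})ᴴ X_{Ω₁})⁻¹ (X_{Ω₁})ᴴ`
(well defined since the Gram matrix is invertible),
`‖X_{Ω₁}^† X_{Ω₂}‖ ≤ δ_{2s}/(1 − δ_s)`. -/
theorem specNorm_pseudoinverse_mul_le
    {T M : ℕ} (X : Matrix (Fin T) (Fin M) ℂ) (s : ℕ) (δs δ2s : ℝ)
    (hXs : RIP X s δs) (hX2s : RIP X (2 * s) δ2s)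
    (Ω₁ Ω₂ : Finset (Fin M)) (hdisj : Disjoint Ω₁ Ω₂)
    (h₁ : Ω₁.card ≤ s) (h₁₂ : (Ω₁ ∪ Ω₂).card ≤ 2 * s) :
    IsUnit ((cols X Ω₁)ᴴ * cols X Ω₁) ∧
      specNorm ((((cols X Ω₁)ᴴ * cols X Ω₁)⁻¹ * (cols X Ω₁)ᴴ) * cols X Ω₂) ≤
        δ2s / (1 - δs) := by
  have hδ : 0 < 1 - δs := by linarith [hXs.2.1]
  have hU : IsUnit ((cols X Ω₁)ᴴ * cols X Ω₁) := by
    rw [← Matrix.mulVec_injective_iff_isUnit]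
    rw [← Matrix.coe_mulVecLin, ← LinearMap.ker_eq_bot, LinearMap.ker_eq_bot']
    intro v hv
    replace hv := gram_ker _ _ hv
    have := rip_lower hXs Ω₁ h₁ v
    rw [hv] at this
    simp only [Pi.zero_apply, norm_zero, ne_eq, OfNat.ofNat_ne_zero, not_false_eq_true, zero_pow,
      Finset.sum_const_zero] at this
    have h0 : ∑ i, ‖v i‖ ^ 2 ≤ 0 := by
      by_contra hc
      push Not at hc
      nlinarith [mul_pos hδ hc]
    ext i
    have h1 := Finset.single_le_sum (f := fun i => ‖v i‖ ^ 2) (fun i _ => sq_nonneg _)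
      (Finset.mem_univ i)
    have h2 : ‖v i‖ ^ 2 = 0 := le_antisymm (h1.trans h0) (sq_nonneg _)
    simpa using h2
  refine ⟨hU, ?_⟩
  have hq : 0 ≤ δ2s / (1 - δs) := div_nonneg hX2s.1 hδ.le
  refine ContinuousLinearMap.opNorm_le_bound _ hq fun x => ?_
  set P := ((cols X Ω₁)ᴴ * cols X Ω₁)⁻¹ * (cols X Ω₁)ᴴ * cols X Ω₂ with hP
  set w : Ω₂ → ℂ := x.ofLp with hw
  set u : Ω₁ → ℂ := P *ᵥ w with hu
  have hPx : LinearMap.toContinuousLinearMap (Matrix.toEuclideanLin P) x = WithLp.toLp 2 u := rfl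
  rw [hPx]
  have hGu : ((cols X Ω₁)ᴴ * cols X Ω₁) *ᵥ u = (cols X Ω₁)ᴴ *ᵥ (cols X Ω₂ *ᵥ w) := by
    rw [hu, hP, Matrix.mulVec_mulVec, Matrix.mulVec_mulVec, ← Matrix.mul_assoc, ← Matrix.mul_assoc,
      Matrix.mul_nonsing_inv _ ((Matrix.isUnit_iff_isUnit_det _).1 hU), Matrix.one_mul]
  have hin : (star (cols X Ω₁ *ᵥ u) ⬝ᵥ (cols X Ω₂ *ᵥ w)).re =
      ∑ j, ‖(cols X Ω₁ *ᵥ u) j‖ ^ 2 := by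
    rw [Matrix.star_mulVec, ← Matrix.dotProduct_mulVec, ← hGu, ← Matrix.mulVec_mulVec,
      Matrix.dotProduct_mulVec, ← Matrix.star_mulVec, dotProduct, Complex.re_sum]
    refine Finset.sum_congr rfl fun j _ => ?_
    simp only [Complex.sq_norm, Complex.normSq_apply]
    simp
  have hb := rip_inner hX2s Ω₁ Ω₂ hdisj h₁₂ u w
  have hl := rip_lower hXs Ω₁ h₁ u
  rw [hin] at hb
  have hnu : ‖WithLp.toLp 2 u‖ ^ 2 = ∑ i, ‖u i‖ ^ 2 := EuclideanSpace.norm_sq_eq _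
  have hnw : ‖x‖ ^ 2 = ∑ i, ‖w i‖ ^ 2 := EuclideanSpace.norm_sq_eq _
  rw [← hnu] at hl hb
  rw [← hnw] at hb
  set a := ‖WithLp.toLp 2 u‖
  have ha : 0 ≤ a := norm_nonneg _
  have hx : 0 ≤ ‖x‖ := norm_nonneg _
  have h3 : (1 - δs) * a ^ 2 ≤ δ2s * a * ‖x‖ := by
    refine hl.trans (abs_le_of_sq_le_sq' ?_ (mul_nonneg (mul_nonneg hX2s.1 ha) hx)).2
    linarith
  rw [div_mul_eq_mul_div, le_div_iff₀ hδ]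
  rcases ha.eq_or_lt with h0 | h0
  · rw [← h0, zero_mul]
    exact mul_nonneg hX2s.1 hx
  · refine le_of_mul_le_mul_right ?_ h0
    linarith
end

section
/- Let γ and p be reals with 0 ≤ γ < 1 and 0 < p < (1−γ)/2. Then R_K := ((1−γ)/2)·ln( (1−p)(1−γ) / (p(1+γ)) ) − ln( 2(1−p)/(1+γ) ) > 0. -/
/-- Positivity of the exponential decay rate `R_K` in Corollary 2 (equation
(asymptotic_i)): for `0 ≤ γ < 1` and `0 < p < (1−γ)/2`,
`R_K = ((1−γ)/2)·ln((1−p)(1−γ)/(p(1+γ))) − ln(2(1−p)/(1+γ)) > 0`. -/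
theorem rate_RK_pos (γ p : ℝ) (hγ0 : 0 ≤ γ) (hγ1 : γ < 1)
    (hp0 : 0 < p) (hp : p < (1 - γ) / 2) :
    0 < (1 - γ) / 2 * Real.log ((1 - p) * (1 - γ) / (p * (1 + γ))) -
      Real.log (2 * (1 - p) / (1 + γ)) := by
  have h1 : 0 < 1 - γ := by linarith
  have h2 : 0 < 1 + γ := by linarith
  have h3 : 0 < 1 - p := by linarith
  have hx : 0 < 2 * p / (1 - γ) := by positivity
  have hy : 0 < 2 * (1 - p) / (1 + γ) := by positivity
  have e : (1 - p) * (1 - γ) / (p * (1 + γ))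
      = (2 * (1 - p) / (1 + γ)) / (2 * p / (1 - γ)) := by
    field_simp
  rw [e, Real.log_div hy.ne' hx.ne']
  have hx1 : 2 * p / (1 - γ) ≠ 1 := by
    intro h
    rw [div_eq_one_iff_eq h1.ne'] at h
    linarith
  have lx := Real.log_lt_sub_one_of_pos hx hx1
  have ly := Real.log_le_sub_one_of_pos hy
  have mx := mul_lt_mul_of_pos_left lx (by linarith : 0 < (1 - γ) / 2)
  have my := mul_le_mul_of_nonneg_left ly (by linarith : 0 ≤ (1 + γ) / 2)
  have ex : (1 - γ) / 2 * (2 * p / (1 - γ) - 1) = p - (1 - γ) / 2 := by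
    field_simp
  have ey : (1 + γ) / 2 * (2 * (1 - p) / (1 + γ) - 1) = (1 - p) - (1 + γ) / 2 := by
    field_simp
  rw [ex] at mx
  rw [ey] at my
  linarith
end
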